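/- The space (ℝ², d*) is uniformly convex in the sense of Takahashi: for each ε > 0 there exists δ = δ(ε) > 0 such that for every c > 0 and all x, y, z ∈ ℝ² with d*(z,x) ≤ c, d*(z,y) ≤ c and d*(x,y) ≥ c·ε, and for every midpoint m of x and y (i.e. d*(x,m) = d*(m,y) = d*(x,y)/2), one has d*(z, m) ≤ c·(1 − δ). -/

import Mathlib

/-- The river metric on ℝ². -/
noncomputable def riverDist (u v : ℝ × ℝ) : ℝ :=
  if u.1 = v.1 then |u.2 - v.2| else |u.2| + |v.2| + |u.1 - v.1|

/-- The metric segment between two points of ℝ² with the river metric. -/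
def riverSegment (u v : ℝ × ℝ) : Set (ℝ × ℝ) :=
  {z | riverDist u z + riverDist z v = riverDist u v}

/-- A set is convex (w.r.t. the river metric) if it contains all metric segments
between its points. -/
def IsRiverConvex (K : Set (ℝ × ℝ)) : Prop :=
  ∀ u ∈ K, ∀ v ∈ K, riverSegment u v ⊆ K

/-- `m` is a midpoint of `u` and `v` for the river metric. -/
def IsRiverMidpoint (u v m : ℝ × ℝ) : Prop :=
  riverDist u m = riverDist u v / 2 ∧ riverDist m v = riverDist u v / 2

/-!
With the river metric the plane is a tree: the river `{y = 0}` with a vertical line attached at each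
of its points. Trees satisfy the four-point condition, and applied to `z`, `x`, `y` and a midpoint
`m` of `x` and `y` it gives `d(z, m) ≤ max (d(z, x)) (d(z, y)) - d(x, y) / 2`, so `δ = ε / 2` works.

The four-point condition holds as soon as the Gromov product at a single point `o` satisfies
`min (x | y)_o (y | z)_o ≤ (x | z)_o`. At the origin, the river metric has a Gromov product computed
from that of the real line: on a common vertical line the two segments from the origin share the
river up to this line and then separate as in `ℝ`; on different vertical lines they separate within
the river.
-/

/-- The Gromov product `(x | y)_o` for the distance function `d`: in a tree, the length of the
common initial part of the segments from `o` to `x` and from `o` to `y`. -/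
noncomputable def gromovProduct {X : Type*} (d : X → X → ℝ) (o x y : X) : ℝ :=
  (d x o + d y o - d x y) / 2

/-- The four-point condition on a distance function, which characterizes the metric subspaces of
real trees. The order of the arguments of `d` is chosen so that no symmetry is needed to bound the
distance to a midpoint. -/
def FourPointCondition {X : Type*} (d : X → X → ℝ) : Prop :=
  ∀ w x y z, d w x + d y z ≤ max (d w y + d x z) (d w z + d y x)

section FourPoint

variable {X : Type*}

theorem gromovProduct_comm {d : X → X → ℝ} (d_comm : ∀ x y, d x y = d y x) (o x y : X) :
    gromovProduct d o x y = gromovProduct d o y x := by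
  simp only [gromovProduct, d_comm x y, add_comm (d x o)]

theorem gromovProduct_dist_nonneg [PseudoMetricSpace X] (o x y : X) :
    0 ≤ gromovProduct dist o x y :=
  div_nonneg (sub_nonneg.2 (dist_triangle_right x y o)) zero_le_two

theorem gromovProduct_dist_le_dist_left [PseudoMetricSpace X] (o x y : X) :
    gromovProduct dist o x y ≤ dist x o := by
  have := dist_triangle_left y o x
  unfold gromovProduct
  linarith

theorem gromovProduct_dist_le_of_dist_add_dist_eq [PseudoMetricSpace X] {x y z : X} (o : X)
    (h : dist x y + dist y z = dist x z) :
    gromovProduct dist o x z ≤ gromovProduct dist o y z := by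
  have := dist_triangle x y o
  unfold gromovProduct
  linarith

theorem gromovProduct_dist_le_of_dist_base_add_dist_eq [PseudoMetricSpace X] {o x y : X}
    (h : dist o x + dist x y = dist o y) (z : X) :
    gromovProduct dist o x z ≤ gromovProduct dist o y z := by
  have := dist_triangle_left y z x
  rw [dist_comm o x, dist_comm o y] at h
  unfold gromovProduct
  linarith

theorem min_add_add_le_add_of_min_le {R : Type*} [AddCommMonoid R] [LinearOrder R]
    [IsOrderedAddMonoid R] {s : X → X → R} (s_comm : ∀ x y, s x y = s y x)
    (min_le : ∀ x y z, min (s x y) (s y z) ≤ s x z) (w x y z : X) :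
    min (s w y + s x z) (s w z + s y x) ≤ s w x + s y z := by
  wlog wx_le_yz : s w x ≤ s y z generalizing w x y z
  · have swapped := this y z w x (le_of_not_ge wx_le_yz)
    rwa [s_comm y w, s_comm z x, add_comm (s y x), add_comm (s y z)] at swapped
  rw [min_le_iff]
  rcases min_le_iff.1 (min_le w y x) with wy_le_wx | yx_le_wx <;>
    rcases min_le_iff.1 (min_le w z x) with wz_le_wx | zx_le_wx
  · rcases min_le_iff.1 (min_le y x z) with yx_le_yz | xz_le_yz
    · exact .inr (add_le_add wz_le_wx yx_le_yz)
    · exact .inl (add_le_add wy_le_wx xz_le_yz)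
  · exact .inl (add_le_add wy_le_wx (s_comm x z ▸ zx_le_wx.trans wx_le_yz))
  · exact .inr (add_le_add wz_le_wx (yx_le_wx.trans wx_le_yz))
  · rcases min_le_iff.1 (min_le y w z) with yw_le_yz | wz_le_yz
    · rw [s_comm y w] at yw_le_yz
      rw [s_comm z x] at zx_le_wx
      exact .inl ((add_comm _ _).trans_le (add_le_add zx_le_wx yw_le_yz))
    · exact .inr ((add_comm _ _).trans_le (add_le_add yx_le_wx wz_le_yz))

theorem FourPointCondition.of_min_gromovProduct_le {d : X → X → ℝ} (o : X)
    (d_comm : ∀ x y, d x y = d y x)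
    (min_le : ∀ x y z, min (gromovProduct d o x y) (gromovProduct d o y z) ≤
      gromovProduct d o x z) :
    FourPointCondition d := by
  intro w x y z
  have min_add_le :=
    min_add_add_le_add_of_min_le (gromovProduct_comm d_comm o) min_le w x y z
  simp only [gromovProduct, min_le_iff] at min_add_le
  exact le_max_iff.2 (min_add_le.imp (fun h => by linarith) (fun h => by linarith))

theorem FourPointCondition.le_max_sub_half_of_midpoint {d : X → X → ℝ} (hd : FourPointCondition d)
    {x y m : X} (hxm : d x m = d x y / 2) (hmy : d m y = d x y / 2) (z : X) :
    d z m ≤ max (d z x) (d z y) - d x y / 2 := by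
  have four_point : d z m + d x y ≤ max (d z x) (d z y) + d x y / 2 := by
    simpa only [hxm, hmy, max_add_add_right] using hd z m x y
  linarith

end FourPoint

theorem min_gromovProduct_dist_real_le (o a b c : ℝ) :
    min (gromovProduct dist o a b) (gromovProduct dist o b c) ≤ gromovProduct dist o a c := by
  wlog hac : a ≤ c generalizing a c
  · rw [min_comm, gromovProduct_comm dist_comm o a b, gromovProduct_comm dist_comm o b c,
      gromovProduct_comm dist_comm o a c]
    exact this c a (le_of_not_ge hac)
  rcases le_total b a with hba | hab
  · have a_between : Wbtw ℝ b a c := (wbtw_iff_of_le (hba.trans hac)).2 ⟨hba, hac⟩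
    exact min_le_of_right_le
      (gromovProduct_dist_le_of_dist_add_dist_eq o a_between.dist_add_dist)
  rcases le_total c b with hcb | hbc
  · have c_between : Wbtw ℝ b c a := ((wbtw_iff_of_le hab).2 ⟨hac, hcb⟩).symm
    rw [gromovProduct_comm dist_comm o a b, gromovProduct_comm dist_comm o a c]
    exact min_le_of_left_le
      (gromovProduct_dist_le_of_dist_add_dist_eq o c_between.dist_add_dist)
  rcases le_total o b with hob | hbo
  · have b_between : Wbtw ℝ o b c := (wbtw_iff_of_le (hob.trans hbc)).2 ⟨hob, hbc⟩
    rw [gromovProduct_comm dist_comm o a b, gromovProduct_comm dist_comm o a c]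
    exact min_le_of_left_le
      (gromovProduct_dist_le_of_dist_base_add_dist_eq b_between.dist_add_dist a)
  · have b_between : Wbtw ℝ o b a := ((wbtw_iff_of_le (hab.trans hbo)).2 ⟨hab, hbo⟩).symm
    exact min_le_of_right_le
      (gromovProduct_dist_le_of_dist_base_add_dist_eq b_between.dist_add_dist c)

theorem riverDist_comm (u v : ℝ × ℝ) : riverDist u v = riverDist v u := by
  simp only [riverDist, eq_comm (a := u.1), abs_sub_comm u.1, abs_sub_comm u.2, add_comm |u.2|]

theorem riverDist_zero_right (u : ℝ × ℝ) : riverDist u 0 = |u.1| + |u.2| := by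
  by_cases hu : u.1 = 0 <;> simp [riverDist, hu, add_comm]

theorem riverDist_of_fst_eq {u v : ℝ × ℝ} (h : u.1 = v.1) : riverDist u v = |u.2 - v.2| :=
  if_pos h

theorem riverDist_of_fst_ne {u v : ℝ × ℝ} (h : u.1 ≠ v.1) :
    riverDist u v = |u.2| + |v.2| + |u.1 - v.1| :=
  if_neg h

theorem gromovProduct_riverDist_of_fst_eq {u v : ℝ × ℝ} (h : u.1 = v.1) :
    gromovProduct riverDist 0 u v = |u.1| + gromovProduct dist 0 u.2 v.2 := by
  simp only [gromovProduct, riverDist_zero_right, riverDist_of_fst_eq h, Real.dist_eq,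
    sub_zero, ← h]
  ring

theorem gromovProduct_riverDist_of_fst_ne {u v : ℝ × ℝ} (h : u.1 ≠ v.1) :
    gromovProduct riverDist 0 u v = gromovProduct dist 0 u.1 v.1 := by
  simp only [gromovProduct, riverDist_zero_right, riverDist_of_fst_ne h, Real.dist_eq, sub_zero]
  ring

theorem gromovProduct_riverDist_le_abs_fst_of_fst_ne {u v : ℝ × ℝ} (h : u.1 ≠ v.1) :
    gromovProduct riverDist 0 u v ≤ |u.1| := by
  simpa only [gromovProduct_riverDist_of_fst_ne h, Real.dist_0_eq_abs] using
    gromovProduct_dist_le_dist_left 0 u.1 v.1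

theorem min_gromovProduct_riverDist_le (u v w : ℝ × ℝ) :
    min (gromovProduct riverDist 0 u v) (gromovProduct riverDist 0 v w) ≤
      gromovProduct riverDist 0 u w := by
  by_cases huw : u.1 = w.1
  · by_cases huv : u.1 = v.1
    · rw [gromovProduct_riverDist_of_fst_eq huw, gromovProduct_riverDist_of_fst_eq huv,
        gromovProduct_riverDist_of_fst_eq (huv.symm.trans huw), ← huv, min_add_add_left]
      gcongr
      exact min_gromovProduct_dist_real_le 0 u.2 v.2 w.2
    · calc min (gromovProduct riverDist 0 u v) (gromovProduct riverDist 0 v w)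
          ≤ gromovProduct riverDist 0 u v := min_le_left _ _
        _ ≤ |u.1| := gromovProduct_riverDist_le_abs_fst_of_fst_ne huv
        _ ≤ |u.1| + gromovProduct dist 0 u.2 w.2 :=
          le_add_of_nonneg_right (gromovProduct_dist_nonneg 0 u.2 w.2)
        _ = gromovProduct riverDist 0 u w := (gromovProduct_riverDist_of_fst_eq huw).symm
  · rw [gromovProduct_riverDist_of_fst_ne huw]
    by_cases huv : u.1 = v.1
    · rw [gromovProduct_riverDist_of_fst_ne (ne_of_eq_of_ne huv.symm huw), ← huv]
      exact min_le_right _ _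
    · by_cases hvw : v.1 = w.1
      · rw [gromovProduct_riverDist_of_fst_ne huv, hvw]
        exact min_le_left _ _
      · rw [gromovProduct_riverDist_of_fst_ne huv, gromovProduct_riverDist_of_fst_ne hvw]
        exact min_gromovProduct_dist_real_le 0 u.1 v.1 w.1

theorem fourPointCondition_riverDist : FourPointCondition riverDist :=
  .of_min_gromovProduct_le 0 riverDist_comm min_gromovProduct_riverDist_le

/-- (ℝ², d*) is uniformly convex in the sense of Takahashi. -/
theorem river_uniformly_convex :
    ∀ ε : ℝ, 0 < ε → ∃ δ : ℝ, 0 < δ ∧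
      ∀ c : ℝ, 0 < c → ∀ x y z m : ℝ × ℝ,
        riverDist z x ≤ c → riverDist z y ≤ c → c * ε ≤ riverDist x y →
        IsRiverMidpoint x y m → riverDist z m ≤ c * (1 - δ) := by
  intro ε hε
  refine ⟨ε / 2, half_pos hε, fun c _ x y z m hzx hzy hxy ⟨hxm, hmy⟩ => ?_⟩
  calc riverDist z m
      ≤ max (riverDist z x) (riverDist z y) - riverDist x y / 2 :=
        fourPointCondition_riverDist.le_max_sub_half_of_midpoint hxm hmy z
    _ ≤ c - c * ε / 2 := by gcongr; exact max_le hzx hzy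
    _ = c * (1 - ε / 2) := by ring
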